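/- arXiv:2007.02344 — 11 statements merged into one kernel-verified Lean document; each statement's English description precedes it below -/
import Mathlib

section
/- Let n, m, k be natural numbers with k ≥ 1. If n ≡ m (mod 2^k), then for every j with 0 ≤ j < k, the iterates T^j(n) and T^j(m) have the same parity, i.e. T^j(n) ≡ T^j(m) (mod 2). -/
/-!
Each application of `T` preserves congruence while lowering the modulus from `2 ^ (k + 1)` to
`2 ^ k` (`T_modEq`). Hence `T^[j] n` and `T^[j] m` still agree modulo `2 ^ (k - j)`, an even modulus
for `j < k`.
-/

/-- The 3x+1 map: T(n) = n/2 if n is even, (3n+1)/2 if n is odd. -/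
def T (n : ℕ) : ℕ := if n % 2 = 0 then n / 2 else (3 * n + 1) / 2

/-- One step of `T` costs at most one binary digit of agreement: both numbers take the same branch,
and halving turns a congruence modulo `2 ^ (k + 1)` into one modulo `2 ^ k`. -/
theorem T_modEq {n m k : ℕ} (h : n ≡ m [MOD 2 ^ (k + 1)]) : T n ≡ T m [MOD 2 ^ k] := by
  have h2 : n % 2 = m % 2 := h.of_dvd (dvd_pow_self 2 k.succ_ne_zero)
  have key : 2 * T n ≡ 2 * T m [MOD 2 * 2 ^ k] := by
    rw [← pow_succ']
    rcases Nat.mod_two_eq_zero_or_one n with h0 | h1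
    · have hn : 2 * T n = n := by unfold T; split_ifs <;> omega
      have hm : 2 * T m = m := by unfold T; split_ifs <;> omega
      rwa [hn, hm]
    · have hn : 2 * T n = 3 * n + 1 := by unfold T; split_ifs <;> omega
      have hm : 2 * T m = 3 * m + 1 := by unfold T; split_ifs <;> omega
      rw [hn, hm]
      exact (h.mul_left 3).add_right 1
  exact Nat.ModEq.mul_left_cancel' two_ne_zero key

/-- If n ≡ m (mod 2^k), then for every j < k the iterates T^j(n) and T^j(m)
have the same parity. -/
theorem parity_vector_periodic (n m k : ℕ) (hk : 1 ≤ k)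
    (h : n ≡ m [MOD 2 ^ k]) :
    ∀ j, j < k → T^[j] n ≡ T^[j] m [MOD 2] := by
  intro j hj
  clear hk
  induction j generalizing n m k with
  | zero => exact h.of_dvd (dvd_pow_self 2 hj.ne')
  | succ j ih =>
    obtain ⟨k, rfl⟩ := Nat.exists_eq_succ_of_ne_zero (Nat.ne_zero_of_lt hj)
    exact ih (T n) (T m) k (T_modEq h) (Nat.lt_of_succ_lt_succ hj)
end

section
/- For every k ≥ 1, the map sending each residue n ∈ {0, 1, …, 2^k − 1} to its parity vector of length k, namely the function j ↦ T^j(n) mod 2 for 0 ≤ j < k, is a bijection onto the set {0,1}^k of all binary sequences of length k. In particular, among any 2^k consecutive natural numbers, every one of the 2^k possible parity vectors of length k occurs exactly once. -/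
theorem two_mul_T_of_even {n : ℕ} (h : n % 2 = 0) : 2 * T n = n := by
  unfold T; rw [if_pos h]; omega

theorem two_mul_T_of_odd {n : ℕ} (h : n % 2 = 1) : 2 * T n = 3 * n + 1 := by
  unfold T; rw [if_neg (by omega)]; omega

theorem modEq_of_parity_eq (k : ℕ) : ∀ m n : ℕ,
    (∀ j < k, T^[j] m % 2 = T^[j] n % 2) → m ≡ n [MOD 2 ^ k] := by
  induction k with
  | zero => intro m n _; simpa using Nat.modEq_one
  | succ k ih =>
    intro m n h
    have h0 : m % 2 = n % 2 := by simpa using h 0 (Nat.succ_pos k)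
    have hT : T m ≡ T n [MOD 2 ^ k] := ih _ _ fun j hj => by
      simpa only [Function.iterate_succ_apply] using h (j + 1) (by omega)
    have h2 : 2 * T m ≡ 2 * T n [MOD 2 ^ (k + 1)] := by
      rw [pow_succ']
      exact hT.mul_left' 2
    rcases Nat.mod_two_eq_zero_or_one n with hn | hn
    · rwa [two_mul_T_of_even (h0.trans hn), two_mul_T_of_even hn] at h2
    · rw [two_mul_T_of_odd (h0.trans hn), two_mul_T_of_odd hn] at h2
      exact Nat.ModEq.cancel_left_of_coprime
        (Nat.Coprime.pow_left (k + 1) (by decide : Nat.Coprime 2 3))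
        (Nat.ModEq.add_right_cancel' 1 h2)

theorem bijective_parity_add (k a : ℕ) :
    Function.Bijective
      (fun n : Fin (2 ^ k) => fun j : Fin k => decide (T^[(j : ℕ)] (a + n) % 2 = 1)) := by
  rw [Fintype.bijective_iff_injective_and_card]
  refine ⟨fun m n h => ?_, by simp⟩
  have hmod : a + m ≡ a + n [MOD 2 ^ k] := modEq_of_parity_eq k _ _ fun j hj => by
    have hj' := congrFun h ⟨j, hj⟩
    simp only [decide_eq_decide] at hj'
    omega
  exact Fin.ext ((Nat.ModEq.add_left_cancel' a hmod).eq_of_lt_of_lt m.isLt n.isLt)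

/-- For every k ≥ 1, the map sending each residue n ∈ {0, …, 2^k − 1} to its
parity vector of length k is a bijection onto {0,1}^k; moreover among any 2^k
consecutive natural numbers each parity vector of length k occurs exactly once. -/
theorem parity_vector_bijective (k : ℕ) (hk : 1 ≤ k) :
    Function.Bijective
      (fun n : Fin (2 ^ k) => fun j : Fin k => decide (T^[(j : ℕ)] (n : ℕ) % 2 = 1)) ∧
    ∀ (a : ℕ) (v : Fin k → Bool),
      ∃! n, n ∈ Finset.Ico a (a + 2 ^ k) ∧
        (fun j : Fin k => decide (T^[(j : ℕ)] n % 2 = 1)) = v := by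
  refine ⟨by simpa only [Nat.zero_add] using bijective_parity_add k 0, fun a v => ?_⟩
  obtain ⟨i, hi, huniq⟩ := (bijective_parity_add k a).existsUnique v
  refine ⟨a + i, ⟨Finset.mem_Ico.mpr ⟨by omega, by omega⟩, hi⟩, ?_⟩
  rintro n ⟨hn, hv⟩
  obtain ⟨hn₁, hn₂⟩ := Finset.mem_Ico.mp hn
  obtain ⟨d, rfl⟩ := Nat.exists_eq_add_of_le hn₁
  rw [← huniq ⟨d, by omega⟩ hv]
end

section
/- For all natural numbers n, q and k, the k-th iterate satisfies T^k(n + 2^k · q) = T^k(n) + 3^(k₂(n,k)) · q, where k₂(n,k) is the number of indices j with 0 ≤ j < k such that T^j(n) is odd. -/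
/-- k₂(n,k): the number of indices j < k such that T^j(n) is odd. -/
def k2 (n k : ℕ) : ℕ := ((Finset.range k).filter fun j => Odd (T^[j] n)).card

theorem T_add_two_mul (m r : ℕ) :
    T (m + 2 * r) = T m + (if Odd m then 3 else 1) * r := by
  simp only [T, Nat.odd_iff]
  split_ifs <;> omega

theorem k2_succ (n k : ℕ) :
    k2 n (k + 1) = k2 n k + if Odd (T^[k] n) then 1 else 0 := by
  unfold k2
  rw [Finset.range_add_one, Finset.filter_insert]
  split_ifs <;> simp

/-- T^k(n + 2^k·q) = T^k(n) + 3^(k₂(n,k))·q. -/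
theorem iterate_translation (n q k : ℕ) :
    T^[k] (n + 2 ^ k * q) = T^[k] n + 3 ^ k2 n k * q := by
  induction k generalizing q with
  | zero => simp [k2]
  | succ k ih =>
    -- Splitting off one factor of 2 keeps the perturbation even just before the last step.
    have e : n + 2 ^ (k + 1) * q = n + 2 ^ k * (2 * q) := by ring
    rw [Function.iterate_succ_apply', Function.iterate_succ_apply', e, ih,
      mul_left_comm, T_add_two_mul, k2_succ]
    split_ifs <;> ring
end

section
/- Let n ≥ 1 and k ≥ 1 be natural numbers. If 3^(k₂(n,k)) > 2^k, then T^k(n) > n, where k₂(n,k) is the number of indices j with 0 ≤ j < k such that T^j(n) is odd. -/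
theorem three_pow_mul_le (n k : ℕ) : 3 ^ k2 n k * n ≤ 2 ^ k * T^[k] n := by
  induction k with
  | zero => simp [k2]
  | succ k ih =>
    rw [Function.iterate_succ_apply', pow_succ, mul_assoc]
    by_cases hodd : Odd (T^[k] n)
    · have hk2 : k2 n (k + 1) = k2 n k + 1 := by
        simp [k2, Finset.range_add_one, Finset.filter_insert, hodd]
      have hT : 3 * T^[k] n ≤ 2 * T (T^[k] n) := by
        have := Nat.odd_iff.mp hodd
        generalize T^[k] n = m at this ⊢
        unfold T
        split_ifs <;> omega
      calc 3 ^ k2 n (k + 1) * n = 3 * (3 ^ k2 n k * n) := by rw [hk2]; ring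
        _ ≤ 3 * (2 ^ k * T^[k] n) := by gcongr
        _ = 2 ^ k * (3 * T^[k] n) := by ring
        _ ≤ 2 ^ k * (2 * T (T^[k] n)) := by gcongr
    · have hk2 : k2 n (k + 1) = k2 n k := by
        simp [k2, Finset.range_add_one, Finset.filter_insert, hodd]
      have hT : T^[k] n ≤ 2 * T (T^[k] n) := by
        have := Nat.not_odd_iff.mp hodd
        generalize T^[k] n = m at this ⊢
        unfold T
        split_ifs <;> omega
      calc 3 ^ k2 n (k + 1) * n = 3 ^ k2 n k * n := by rw [hk2]
        _ ≤ 2 ^ k * T^[k] n := ih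
        _ ≤ 2 ^ k * (2 * T (T^[k] n)) := by gcongr

/-- If 3^(k₂(n,k)) > 2^k then T^k(n) > n. -/
theorem iterate_gt_of_pow_gt (n k : ℕ) (hn : 1 ≤ n) (hk : 1 ≤ k)
    (h : 3 ^ k2 n k > 2 ^ k) : T^[k] n > n := by
  have h1 : 2 ^ k * n < 3 ^ k2 n k * n := Nat.mul_lt_mul_of_pos_right h hn
  exact lt_of_mul_lt_mul_left (h1.trans_le (three_pow_mul_le n k)) (Nat.zero_le _)
end

section
/- Let n ≥ 1 and k ≥ 1 be natural numbers. If the trajectory of n under T returns to itself after k steps, i.e. T^k(n) = n, then 3^(k₂(n,k)) < 2^k, where k₂(n,k) is the number of indices j with 0 ≤ j < k such that T^j(n) is odd. -/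
theorem pow_mul_add_le (n k : ℕ) : 3 ^ k2 n k * n + k2 n k ≤ 2 ^ k * T^[k] n := by
  induction k with
  | zero => simp [k2]
  | succ k ih =>
    rw [Function.iterate_succ_apply', pow_succ, mul_assoc]
    by_cases ho : Odd (T^[k] n)
    · have hk2 : k2 n (k + 1) = k2 n k + 1 := by
        simp [k2, Finset.range_add_one, Finset.filter_insert, ho]
      have hT : 2 * T (T^[k] n) = 3 * T^[k] n + 1 := by
        have := Nat.odd_iff.mp ho
        generalize T^[k] n = m at *
        unfold T
        split_ifs <;> omega
      have hpos : 1 ≤ 2 ^ k := Nat.one_le_two_pow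
      rw [hk2, hT, pow_succ]
      nlinarith
    · have hk2 : k2 n (k + 1) = k2 n k := by
        simp [k2, Finset.range_add_one, Finset.filter_insert, ho]
      have hT : 2 * T (T^[k] n) = T^[k] n := by
        have := Nat.even_iff.mp (Nat.not_odd_iff_even.mp ho)
        generalize T^[k] n = m at *
        unfold T
        split_ifs
        omega
      rw [hk2, hT]
      exact ih

/-- If T^k(n) = n, then 3^(k₂(n,k)) < 2^k. -/
theorem cycle_pow_lt (n k : ℕ) (hn : 1 ≤ n) (hk : 1 ≤ k)
    (h : T^[k] n = n) : 3 ^ k2 n k < 2 ^ k := by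
  have key := pow_mul_add_le n k
  rw [h] at key
  rcases Nat.eq_zero_or_pos (k2 n k) with h0 | h0
  · rw [h0, pow_zero]
    exact Nat.one_lt_two_pow (by omega)
  · exact Nat.lt_of_mul_lt_mul_right (a := n) (by omega)
end

section
/- Let n ≥ 1 and k ≥ 1 be natural numbers such that T^j(n) is odd for every j with 0 ≤ j < k. Then 2^k · (T^k(n) + 1) = 3^k · (n + 1). -/
/-- An odd step of `T` multiplies `m + 1` by `3 / 2`; iterating this gives the formula. -/
lemma two_mul_T_add_one {m : ℕ} (hm : Odd m) : 2 * (T m + 1) = 3 * (m + 1) := by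
  obtain ⟨r, rfl⟩ := hm
  unfold T
  split_ifs <;> omega

/-- If T^j(n) is odd for all j < k, then 2^k·(T^k(n) + 1) = 3^k·(n + 1). -/
theorem all_odd_iterates_formula (n k : ℕ) (hn : 1 ≤ n) (hk : 1 ≤ k)
    (h : ∀ j, j < k → Odd (T^[j] n)) :
    2 ^ k * (T^[k] n + 1) = 3 ^ k * (n + 1) := by
  -- The formula also holds for `k = 0`, so the induction starts there.
  clear hk
  induction k with
  | zero => simp
  | succ k ih =>
    have ih' := ih fun j hj => h j (hj.trans k.lt_succ_self)
    have step := two_mul_T_add_one (h k k.lt_succ_self)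
    rw [Function.iterate_succ_apply']
    calc 2 ^ (k + 1) * (T (T^[k] n) + 1)
        = 2 ^ k * (2 * (T (T^[k] n) + 1)) := by ring
      _ = 3 * (2 ^ k * (T^[k] n + 1)) := by rw [step]; ring
      _ = 3 ^ (k + 1) * (n + 1) := by rw [ih']; ring
end

section
/- Let n ≥ 1 and k ≥ 1 be natural numbers. The iterates T^j(n) are odd for all j with 0 ≤ j < k if and only if n ≡ 2^k − 1 (mod 2^k). -/
theorem T_two_mul_add_one (m : ℕ) : T (2 * m + 1) + 1 = 3 * (m + 1) := by
  unfold T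
  split_ifs <;> omega

theorem all_odd_iff_dvd (k n : ℕ) :
    (∀ j, j < k → Odd (T^[j] n)) ↔ 2 ^ k ∣ n + 1 := by
  induction k generalizing n with
  | zero => simp
  | succ k ih =>
    -- Split off `j = 0`; the remaining iterates are those of `T n`.
    have split : (∀ j, j < k + 1 → Odd (T^[j] n)) ↔
        Odd n ∧ ∀ j, j < k → Odd (T^[j] (T n)) := by
      constructor
      · exact fun h => ⟨h 0 k.succ_pos, fun j hj => h (j + 1) (Nat.succ_lt_succ hj)⟩
      · rintro ⟨h0, h⟩ (_ | j) hj
        · exact h0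
        · exact h j (Nat.lt_of_succ_lt_succ hj)
    rw [split, ih]
    rcases Nat.even_or_odd n with he | ho
    · refine iff_of_false (fun h => Nat.not_odd_iff_even.2 he h.1) fun h => ?_
      have h2 : 2 ∣ n + 1 := (dvd_pow_self 2 k.succ_ne_zero).trans h
      have := he.two_dvd
      omega
    · obtain ⟨m, rfl⟩ := ho
      have hcop : Nat.Coprime (2 ^ k) 3 := Nat.Coprime.pow_left k (by norm_num)
      rw [T_two_mul_add_one, hcop.dvd_mul_left, pow_succ',
        show 2 * m + 1 + 1 = 2 * (m + 1) by ring, Nat.mul_dvd_mul_iff_left two_pos]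
      exact and_iff_right ⟨m, rfl⟩

theorem dvd_add_one_iff_mod_eq (n : ℕ) {d : ℕ} (hd : 0 < d) :
    d ∣ n + 1 ↔ n % d = d - 1 := by
  have hlt := Nat.mod_lt n hd
  have key : d ∣ n + 1 ↔ d ∣ n % d + 1 := by
    conv_lhs => rw [← Nat.div_add_mod n d, add_assoc]
    exact Nat.dvd_add_right (dvd_mul_right d _)
  rw [key]
  constructor
  · intro h
    have := Nat.le_of_dvd (Nat.succ_pos _) h
    omega
  · intro h
    rw [h, Nat.sub_add_cancel hd]

/-- T^j(n) is odd for all j < k iff n ≡ 2^k − 1 (mod 2^k). -/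
theorem all_odd_iterates_iff (n k : ℕ) (hn : 1 ≤ n) (hk : 1 ≤ k) :
    (∀ j, j < k → Odd (T^[j] n)) ↔ n % 2 ^ k = 2 ^ k - 1 := by
  rw [all_odd_iff_dvd, dvd_add_one_iff_mod_eq n (Nat.two_pow_pos k)]
end

section
/- For every k ≥ 1 and every j with 1 ≤ j ≤ k, we have T^j(2^k − 1) > 2^k − 1. Consequently the stopping time of 2^k − 1 exceeds k, i.e. the least ℓ ≥ 1 with T^ℓ(2^k − 1) < 2^k − 1 (if it exists) satisfies ℓ > k. -/
lemma T_two_mul_sub_one (a : ℕ) (ha : 1 ≤ a) : T (2 * a - 1) = 3 * a - 1 := by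
  unfold T
  split_ifs <;> omega

lemma iterate_T_two_pow_sub_one (j m : ℕ) :
    T^[j] (2 ^ (j + m) - 1) = 3 ^ j * 2 ^ m - 1 := by
  induction j generalizing m with
  | zero => simp
  | succ j ih =>
    have h := ih (m + 1)
    rw [show j + 1 + m = j + (m + 1) by ring, Function.iterate_succ_apply', h,
      show 3 ^ j * 2 ^ (m + 1) = 2 * (3 ^ j * 2 ^ m) by ring,
      T_two_mul_sub_one _ (Nat.one_le_iff_ne_zero.mpr (by positivity)),
      show 3 * (3 ^ j * 2 ^ m) = 3 ^ (j + 1) * 2 ^ m by ring]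

/-- T^j(2^k − 1) > 2^k − 1 for 1 ≤ j ≤ k; consequently the stopping time of
2^k − 1 exceeds k: any ℓ ≥ 1 with T^ℓ(2^k − 1) < 2^k − 1 satisfies ℓ > k. -/
theorem stopping_time_pow_sub_one (k : ℕ) (hk : 1 ≤ k) :
    (∀ j, 1 ≤ j → j ≤ k → T^[j] (2 ^ k - 1) > 2 ^ k - 1) ∧
    (∀ l, 1 ≤ l → T^[l] (2 ^ k - 1) < 2 ^ k - 1 → l > k) := by
  have growth : ∀ j, 1 ≤ j → j ≤ k → T^[j] (2 ^ k - 1) > 2 ^ k - 1 := by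
    intro j hj hjk
    obtain ⟨m, rfl⟩ := Nat.exists_eq_add_of_le hjk
    rw [iterate_T_two_pow_sub_one]
    have h_pow : 2 ^ j < 3 ^ j := Nat.pow_lt_pow_left (by norm_num) (by omega)
    have h_lt : 2 ^ (j + m) < 3 ^ j * 2 ^ m := by
      rw [pow_add]
      exact Nat.mul_lt_mul_of_pos_right h_pow (by positivity)
    have h_pos : 0 < 2 ^ (j + m) := by positivity
    omega
  refine ⟨growth, fun l hl hlt => ?_⟩
  by_contra hle
  exact lt_asymm hlt (growth l hl (not_lt.mp hle))
end

section
/- For every k ≥ 1, N(k) ≤ 2 · N(k−1), where N(k) denotes the number of integers n with 1 ≤ n ≤ 2^k whose stopping time exceeds k, i.e. T^j(n) ≥ n for all 1 ≤ j ≤ k. Equivalently, the distribution function F(k) = N(k)/2^k is nonincreasing in k: F(k) ≤ F(k−1). -/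
open scoped Classical

/-- N(k): the number of integers n with 1 ≤ n ≤ 2^k whose stopping time
exceeds k, i.e. T^j(n) ≥ n for all j ∈ [1, k]. -/
noncomputable def N (k : ℕ) : ℕ :=
  ((Finset.Icc 1 (2 ^ k)).filter fun n => ∀ j ∈ Finset.Icc 1 k, n ≤ T^[j] n).card

/-- The first `j` parities depend only on the residue modulo `2 ^ j`, so `T^[j]` is affine in `q` on
`m + 2 ^ j * q`; `a` is the number of odd steps. The inequality drops the `+ 1` of each odd step. -/
lemma T_iterate_add (j m q : ℕ) :
    ∃ a : ℕ, T^[j] (m + 2 ^ j * q) = T^[j] m + 3 ^ a * q ∧ 3 ^ a * m ≤ 2 ^ j * T^[j] m := by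
  induction j generalizing q with
  | zero => exact ⟨0, by simp⟩
  | succ j ih =>
    obtain ⟨a, h1, h2⟩ := ih (2 * q)
    have e : m + 2 ^ (j + 1) * q = m + 2 ^ j * (2 * q) := by ring
    rw [e, Function.iterate_succ_apply', Function.iterate_succ_apply', h1]
    generalize T^[j] m = x at h2 ⊢
    have e2 : 3 ^ a * (2 * q) = 2 * (3 ^ a * q) := by ring
    rcases Nat.mod_two_eq_zero_or_one x with hx | hx
    · refine ⟨a, ?_, ?_⟩
      · rw [e2, T, T, if_pos (by omega), if_pos hx]
        omega
      · have hT : 2 * T x = x := by rw [T, if_pos hx]; omega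
        calc 3 ^ a * m ≤ 2 ^ j * (2 * T x) := by rw [hT]; exact h2
          _ = 2 ^ (j + 1) * T x := by ring
    · refine ⟨a + 1, ?_, ?_⟩
      · have e3 : 3 ^ (a + 1) * q = 3 * (3 ^ a * q) := by ring
        rw [e2, e3, T, T, if_neg (by omega), if_neg (by omega)]
        omega
      · have hT : 2 * T x = 3 * x + 1 := by rw [T, if_neg (by omega)]; omega
        calc 3 ^ (a + 1) * m = 3 * (3 ^ a * m) := by ring
          _ ≤ 3 * (2 ^ j * x) := by gcongr
          _ ≤ 2 ^ j * (2 * T x) := by rw [hT]; nlinarith [Nat.zero_le (2 ^ j)]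
          _ = 2 ^ (j + 1) * T x := by ring

lemma le_T_iterate_of_add {j K m : ℕ} (hj : j ≤ K)
    (h : m + 2 ^ K ≤ T^[j] (m + 2 ^ K)) : m ≤ T^[j] m := by
  obtain ⟨d, rfl⟩ := Nat.exists_eq_add_of_le hj
  obtain ⟨a, h1, h2⟩ := T_iterate_add j m (2 ^ d)
  rw [pow_add, h1] at h
  rcases le_total (2 ^ j) (3 ^ a) with ha | ha
  · exact Nat.le_of_mul_le_mul_left ((Nat.mul_le_mul_right m ha).trans h2) (by positivity)
  · have := Nat.mul_le_mul_right (2 ^ d) ha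
    omega

lemma N_succ_le (K : ℕ) : N (K + 1) ≤ 2 * N K := by
  unfold N
  set S := (Finset.Icc 1 (2 ^ K)).filter fun n => ∀ j ∈ Finset.Icc 1 K, n ≤ T^[j] n with hS
  calc _ ≤ (S ∪ S.image (· + 2 ^ K)).card := by
        apply Finset.card_le_card
        intro n hn
        simp only [Finset.mem_filter, Finset.mem_Icc] at hn
        obtain ⟨⟨h1, h2⟩, h3⟩ := hn
        rw [pow_succ] at h2
        rw [Finset.mem_union, Finset.mem_image]
        rcases le_or_gt n (2 ^ K) with h | h
        · left
          simp only [hS, Finset.mem_filter, Finset.mem_Icc]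
          exact ⟨⟨h1, h⟩, fun j hj => h3 j ⟨hj.1, by omega⟩⟩
        · right
          obtain ⟨m, rfl⟩ := Nat.exists_eq_add_of_le' h.le
          refine ⟨m, ?_, rfl⟩
          simp only [hS, Finset.mem_filter, Finset.mem_Icc]
          exact ⟨⟨by omega, by omega⟩,
            fun j hj => le_T_iterate_of_add hj.2 (h3 j ⟨hj.1, by omega⟩)⟩
    _ ≤ S.card + (S.image (· + 2 ^ K)).card := Finset.card_union_le _ _
    _ ≤ S.card + S.card := Nat.add_le_add_left Finset.card_image_le _
    _ = 2 * S.card := (two_mul _).symm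

/-- N(k) ≤ 2·N(k−1); equivalently F(k) = N(k)/2^k is nonincreasing. -/
theorem N_le_two_mul (k : ℕ) (hk : 1 ≤ k) :
    N k ≤ 2 * N (k - 1) ∧
    (N k : ℝ) / 2 ^ k ≤ (N (k - 1) : ℝ) / 2 ^ (k - 1) := by
  obtain ⟨K, rfl⟩ := Nat.exists_eq_add_of_le' hk
  rw [Nat.add_sub_cancel]
  have h := N_succ_le K
  refine ⟨h, ?_⟩
  have h' : (N (K + 1) : ℝ) ≤ 2 * N K := by exact_mod_cast h
  rw [div_le_div_iff₀ (by positivity) (by positivity), pow_succ]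
  nlinarith [mul_le_mul_of_nonneg_right h' (by positivity : (0 : ℝ) ≤ 2 ^ K)]
end

section
/- The sequence N(k) tends to infinity as k → ∞, where N(k) denotes the number of integers n with 1 ≤ n ≤ 2^k whose stopping time exceeds k, i.e. T^j(n) ≥ n for all 1 ≤ j ≤ k. That is, for every M there exists K such that N(k) > M for all k ≥ K. -/
open scoped Classical

lemma T_iterate_odd (j t : ℕ) (ht : 1 ≤ t) : T^[j] (2 ^ j * t - 1) = 3 ^ j * t - 1 := by
  induction j generalizing t with
  | zero => simp
  | succ j ih =>
    have hstep : T (2 ^ (j + 1) * t - 1) = 2 ^ j * (3 * t) - 1 := by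
      have hpos : 1 ≤ 2 ^ j * t := Nat.mul_pos (by positivity) ht
      have h1 : 2 ^ (j + 1) * t = 2 * (2 ^ j * t) := by ring
      have h2 : 2 ^ j * (3 * t) = 3 * (2 ^ j * t) := by ring
      rw [h1, h2]
      unfold T
      split_ifs <;> omega
    rw [Function.iterate_succ_apply, hstep, ih (3 * t) (by omega)]
    congr 1
    ring

/-- A number congruent to `-1` modulo `2 ^ c` stays at or above its value for `c` steps. -/
lemma le_T_iterate {c j n : ℕ} (hn : 2 ^ c ∣ n + 1) (hj : j ≤ c) : n ≤ T^[j] n := by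
  obtain ⟨t, ht⟩ := (pow_dvd_pow 2 hj).trans hn
  have ht1 : 1 ≤ t := by
    rcases Nat.eq_zero_or_pos t with rfl | h
    · simp at ht
    · exact h
  have hle : 2 ^ j * t ≤ 3 ^ j * t := by gcongr; norm_num
  have h := T_iterate_odd j t ht1
  rw [← ht, Nat.add_sub_cancel] at h
  rw [h]
  omega

/-- For `2 ≤ a < k` there is an integer counted by `N k` such that `2 ^ a` is the exact power of `2`
dividing its successor. -/
lemma exists_counted {a k : ℕ} (ha : 2 ≤ a) (hak : a < k) :
    ∃ n, (n ∈ Finset.Icc 1 (2 ^ k) ∧ ∀ j ∈ Finset.Icc 1 k, n ≤ T^[j] n) ∧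
      ∃ m, m % 2 = 1 ∧ n + 1 = 2 ^ a * m := by
  obtain ⟨b, rfl⟩ : ∃ b, k = a + 1 + b := ⟨k - (a + 1), by omega⟩
  obtain ⟨m, hm_lt, hm⟩ : ∃ m < 2 ^ (b + 1), 2 ^ (b + 1) ∣ 3 ^ a * m + 1 := by
    have hco : Nat.Coprime (3 ^ a) (2 ^ (b + 1)) := Nat.Coprime.pow _ _ (by norm_num)
    obtain ⟨m, hlt, hm⟩ := Nat.exists_mul_mod_eq_of_coprime (2 ^ (b + 1) - 1) hco (by positivity)
    refine ⟨m, hlt, ?_⟩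
    have hp : 0 < 2 ^ (b + 1) := by positivity
    have h : 3 ^ a * m + 1 ≡ (2 ^ (b + 1) - 1) + 1 [MOD 2 ^ (b + 1)] := Nat.ModEq.add_right 1 hm
    rw [Nat.sub_add_cancel hp] at h
    exact (h.dvd_iff dvd_rfl).2 dvd_rfl
  have hm_odd : m % 2 = 1 := by
    by_contra h
    obtain ⟨r, rfl⟩ : 2 ∣ m := by omega
    have h2 : 2 ∣ 3 ^ a * (2 * r) + 1 := (dvd_pow_self 2 (by omega)).trans hm
    rw [show 3 ^ a * (2 * r) = 2 * (3 ^ a * r) by ring] at h2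
    omega
  obtain ⟨q, hq⟩ := hm
  have hq' : 3 ^ a * m + 1 = 2 * (2 ^ b * q) := by rw [hq]; ring
  have h32 : 2 ^ (a + 1) ≤ 3 ^ a := by
    obtain ⟨c, rfl⟩ : ∃ c, a = c + 2 := ⟨a - 2, by omega⟩
    have : 2 ^ c ≤ 3 ^ c := by gcongr; norm_num
    rw [pow_add 3, show c + 2 + 1 = c + 3 by ring, pow_add 2]
    omega
  have h32m : 2 * (2 ^ a * m) ≤ 3 ^ a * m := by
    rw [← mul_assoc, ← pow_succ']
    gcongr
  have hm1 : 1 ≤ m := by omega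
  have h4 : 4 ≤ 2 ^ a * m := by
    calc 4 = 2 ^ 2 * 1 := by norm_num
      _ ≤ 2 ^ a * m := by gcongr; norm_num
  have hub : 2 ^ a * m ≤ 2 ^ (a + 1 + b) := by
    rw [show a + 1 + b = a + (b + 1) by ring, pow_add]
    gcongr
  have hsucc : 2 ^ a * m - 1 + 1 = 2 ^ a * m := by omega
  refine ⟨2 ^ a * m - 1, ⟨?_, ?_⟩, m, hm_odd, hsucc⟩
  · rw [Finset.mem_Icc]
    omega
  · intro j hj
    rw [Finset.mem_Icc] at hj
    rcases Nat.lt_or_ge a j with haj | hja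
    · obtain ⟨i, rfl⟩ : ∃ i, j = i + 1 + a := ⟨j - (a + 1), by omega⟩
      have hhalf : T (3 ^ a * m - 1) = 2 ^ b * q - 1 := by
        unfold T
        split_ifs <;> omega
      rw [Function.iterate_add_apply, T_iterate_odd a m hm1, Function.iterate_succ_apply, hhalf]
      have hdvd : 2 ^ b ∣ 2 ^ b * q - 1 + 1 := by
        rw [Nat.sub_add_cancel (by omega)]
        exact dvd_mul_right _ _
      have hle := le_T_iterate hdvd (show i ≤ b by omega)
      omega
    · exact le_T_iterate (by rw [hsucc]; exact dvd_mul_right _ _) hja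

lemma exponent_unique {a b m r : ℕ} (hm : m % 2 = 1) (hr : r % 2 = 1)
    (h : 2 ^ a * m = 2 ^ b * r) : a = b := by
  -- By symmetry only the failure `a < b` has to be excluded; it would make `m` even.
  wlog hab : a ≤ b generalizing a b m r
  · exact (this hr hm h.symm (by omega)).symm
  obtain ⟨c, rfl⟩ := Nat.exists_eq_add_of_le hab
  rw [pow_add, mul_assoc] at h
  have h' := Nat.eq_of_mul_eq_mul_left (by positivity) h
  cases c with
  | zero => rfl
  | succ c =>
    rw [pow_succ', mul_assoc] at h'
    omega

/-- N(k) tends to infinity: for every M there is K with N(k) > M for k ≥ K. -/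
theorem N_tendsto_atTop : ∀ M : ℕ, ∃ K : ℕ, ∀ k, K ≤ k → M < N k := by
  intro M
  refine ⟨M + 3, fun k hk => ?_⟩
  choose! f hf g hg using fun a (h : 2 ≤ a ∧ a < k) => exists_counted h.1 h.2
  have hcard : (Finset.Ico 2 k).card ≤ N k := by
    unfold N
    refine Finset.card_le_card_of_injOn f ?_ ?_
    · intro a ha
      have ha' := Finset.mem_Ico.1 (Finset.mem_coe.1 ha)
      rw [Finset.coe_filter]
      exact hf a ha'
    · intro a ha b hb hab
      have ha' := hg a (Finset.mem_Ico.1 (Finset.mem_coe.1 ha))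
      have hb' := hg b (Finset.mem_Ico.1 (Finset.mem_coe.1 hb))
      exact exponent_unique ha'.1 hb'.1 (by rw [← ha'.2, ← hb'.2, hab])
  rw [Nat.card_Ico] at hcard
  omega
end

section
/- Let n, m, k be natural numbers with k ≥ 1. If n ≡ m (mod 2^k), then for every j with 0 ≤ j < k, the iterates T₅^j(n) and T₅^j(m) have the same parity, i.e. T₅^j(n) ≡ T₅^j(m) (mod 2). Moreover, the map sending each residue n ∈ {0, 1, …, 2^k − 1} to its parity vector of length k is a bijection onto {0,1}^k. -/
/-!
The parity vector of length `k` determines, and is determined by, the residue modulo `2 ^ k`.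
Indeed `T5 (2 * a) = a` and `T5 (2 * a + 1) = 5 * a + 3`; since `5` is invertible modulo `2 ^ k`,
two numbers agree modulo `2 ^ (k + 1)` exactly when they have the same parity and their images
under `T5` agree modulo `2 ^ k` (`modEq_two_pow_succ_iff`). Induction on `k` gives the equivalence
`modEq_two_pow_iff`. One direction is the periodicity claim; the other makes the parity vector map
on `Fin (2 ^ k)` injective, hence bijective, as both sides have `2 ^ k` elements.
-/

/-- The 5x+1 map: T₅(n) = n/2 if n is even, (5n+1)/2 if n is odd. -/
def T5 (n : ℕ) : ℕ := if n % 2 = 0 then n / 2 else (5 * n + 1) / 2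

theorem T5_two_mul (a : ℕ) : T5 (2 * a) = a := by
  unfold T5; split_ifs <;> omega

theorem T5_two_mul_add_one (a : ℕ) : T5 (2 * a + 1) = 5 * a + 3 := by
  unfold T5; split_ifs <;> omega

theorem two_mul_modEq_iff (k a b : ℕ) :
    2 * a ≡ 2 * b [MOD 2 ^ (k + 1)] ↔ a ≡ b [MOD 2 ^ k] := by
  rw [pow_succ']
  exact ⟨Nat.ModEq.mul_left_cancel' two_ne_zero, Nat.ModEq.mul_left' 2⟩

theorem five_mul_modEq_iff (k a b : ℕ) :
    5 * a ≡ 5 * b [MOD 2 ^ k] ↔ a ≡ b [MOD 2 ^ k] := by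
  have h : Nat.gcd (2 ^ k) 5 = 1 := Nat.Coprime.pow_left k (by norm_num)
  exact ⟨Nat.ModEq.cancel_left_of_coprime h, Nat.ModEq.mul_left 5⟩

/-- One step of `T5` consumes exactly one binary digit of information. -/
theorem modEq_two_pow_succ_iff (k n m : ℕ) :
    n ≡ m [MOD 2 ^ (k + 1)] ↔ n ≡ m [MOD 2] ∧ T5 n ≡ T5 m [MOD 2 ^ k] := by
  by_cases hp : n ≡ m [MOD 2]
  · simp only [hp, true_and]
    obtain ⟨a, rfl | rfl⟩ := n.even_or_odd' <;> obtain ⟨b, rfl | rfl⟩ := m.even_or_odd'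
    · rw [T5_two_mul, T5_two_mul, two_mul_modEq_iff]
    · unfold Nat.ModEq at hp; omega
    · unfold Nat.ModEq at hp; omega
    · rw [T5_two_mul_add_one, T5_two_mul_add_one, Nat.ModEq.add_iff_right rfl,
        Nat.ModEq.add_iff_right rfl, two_mul_modEq_iff, five_mul_modEq_iff]
  · simp only [hp, false_and, iff_false]
    exact fun h => hp (h.of_dvd (dvd_pow_self 2 k.succ_ne_zero))

theorem modEq_two_pow_iff (k n m : ℕ) :
    n ≡ m [MOD 2 ^ k] ↔ ∀ j, j < k → T5^[j] n ≡ T5^[j] m [MOD 2] := by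
  induction k generalizing n m with
  | zero => simp [Nat.modEq_one]
  | succ k ih =>
    rw [modEq_two_pow_succ_iff, ih, Nat.forall_lt_succ_left]
    simp only [Function.iterate_succ_apply, Function.iterate_zero, id_eq]

/-- If n ≡ m (mod 2^k) then T₅^j(n) ≡ T₅^j(m) (mod 2) for all j < k; moreover
the map sending each residue n ∈ {0, …, 2^k − 1} to its parity vector of
length k is a bijection onto {0,1}^k. -/
theorem parity_vector_periodic_and_bijective_T5 (k : ℕ) (hk : 1 ≤ k) :
    (∀ n m : ℕ, n ≡ m [MOD 2 ^ k] →
      ∀ j, j < k → T5^[j] n ≡ T5^[j] m [MOD 2]) ∧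
    Function.Bijective
      (fun n : Fin (2 ^ k) => fun j : Fin k => decide (T5^[(j : ℕ)] (n : ℕ) % 2 = 1)) := by
  refine ⟨fun n m => (modEq_two_pow_iff k n m).1, ?_⟩
  rw [Fintype.bijective_iff_injective_and_card]
  refine ⟨fun n m h => ?_, by simp⟩
  have hmod : (n : ℕ) ≡ m [MOD 2 ^ k] := by
    refine (modEq_two_pow_iff k n m).2 fun j hj => ?_
    have hbit := congrFun h ⟨j, hj⟩
    simp only [decide_eq_decide] at hbit
    unfold Nat.ModEq
    omega
  exact Fin.ext (hmod.eq_of_lt_of_lt n.isLt m.isLt)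
end
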